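/- For every k ≥ 1, if p is a shortest (s,t)-path in G^k that contains the vertex y^k_1 and q is a shortest (s,t)-path in G^k that contains the vertex y^k_6, then every reconfiguration sequence from p to q has length at least 9(2^k − 1); in particular the reconfiguration distance between p and q is at least 9(2^k − 1). -/

import Mathlib

/-- Vertices of the graph `G^k`: `s`, `t`, vertices `x^{ℓ+1}_{i+1}` (for `ℓ : Fin k`, `i : Fin 7`)
and `y^{ℓ+1}_{i+1}` (for `ℓ : Fin k`, `i : Fin 6`).  A value `ℓ : Fin k` encodes level `ℓ+1`,
and an index `i : Fin 7` (resp. `Fin 6`) encodes the subscript `i+1`. -/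
inductive GVert (k : ℕ) : Type where
  | s : GVert k
  | t : GVert k
  | x (ℓ : Fin k) (i : Fin 7) : GVert k
  | y (ℓ : Fin k) (i : Fin 6) : GVert k
deriving DecidableEq, Fintype

/-- The (oriented) edge relation generating the graph `G^k`. -/
def gkRel (k : ℕ) : GVert k → GVert k → Prop
  | GVert.s, GVert.x ℓ _ => (ℓ : ℕ) = k - 1
  | GVert.x ℓ i, GVert.y ℓ' i' => ℓ = ℓ' ∧ ((i : ℕ) = (i' : ℕ) ∨ (i : ℕ) = (i' : ℕ) + 1)
  | GVert.y ℓ i, GVert.x ℓ' j => (ℓ : ℕ) = (ℓ' : ℕ) + 1 ∧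
      (((i : ℕ) = 0 ∨ (i : ℕ) = 2 ∨ (i : ℕ) = 4) ∨
        ((i : ℕ) = 1 ∧ (j : ℕ) = 0) ∨ ((i : ℕ) = 3 ∧ (j : ℕ) = 6) ∨
        ((i : ℕ) = 5 ∧ (j : ℕ) = 0))
  | GVert.y ℓ _, GVert.t => (ℓ : ℕ) = 0
  | _, _ => False

/-- The graph `G^k`. -/
def Gk (k : ℕ) : SimpleGraph (GVert k) := SimpleGraph.fromRel (gkRel k)

/-- `p` is a shortest `(s,t)`-path in `H`, recorded as the sequence of its `L+1` vertices;
its length `L` is required to equal the distance between `s` and `t`. -/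
def IsShortestSTPath {V : Type*} (H : SimpleGraph V) (s t : V) (L : ℕ)
    (p : Fin (L + 1) → V) : Prop :=
  p 0 = s ∧ p (Fin.last L) = t ∧ (∀ i : Fin L, H.Adj (p i.castSucc) (p i.succ)) ∧
    L = H.dist s t

/-- Two vertex sequences differ in exactly one position. -/
def DiffOne {N : ℕ} {α : Type*} (p q : Fin N → α) : Prop :=
  ∃ i, p i ≠ q i ∧ ∀ j, j ≠ i → p j = q j

/-- `ρ 0, ρ 1, …, ρ ℓ` is a reconfiguration sequence of length `ℓ` from the shortest
`(s,t)`-path `p` to the shortest `(s,t)`-path `q`: all its members are shortest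
`(s,t)`-paths and consecutive members differ in exactly one position. -/
def SPReconfSeq {V : Type*} (H : SimpleGraph V) (s t : V) (L : ℕ)
    (ρ : ℕ → (Fin (L + 1) → V)) (ℓ : ℕ) (p q : Fin (L + 1) → V) : Prop :=
  ρ 0 = p ∧ ρ ℓ = q ∧ (∀ i ≤ ℓ, IsShortestSTPath H s t L (ρ i)) ∧
    ∀ i < ℓ, DiffOne (ρ i) (ρ (i + 1))

/-- Rank of a vertex: its position on a shortest path. -/
def vrank {k : ℕ} : GVert k → ℤ
  | GVert.s => 0
  | GVert.t => 2 * k + 1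
  | GVert.x ℓ _ => 2 * k - 1 - 2 * (ℓ : ℕ)
  | GVert.y ℓ _ => 2 * k - 2 * (ℓ : ℕ)

/-- Subscript of a vertex. -/
def vidx {k : ℕ} : GVert k → ℤ
  | GVert.s => 0
  | GVert.t => 0
  | GVert.x _ i => (i : ℕ)
  | GVert.y _ i => (i : ℕ)

lemma gkRel_rank {k : ℕ} (u v : GVert k) (h : gkRel k u v) : vrank v = vrank u + 1 := by
  rcases u with _ | _ | ⟨l, i⟩ | ⟨l, i⟩ <;> rcases v with _ | _ | ⟨l', i'⟩ | ⟨l', i'⟩ <;>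
    simp only [gkRel, vrank] at h ⊢
  · have := l'.2
    omega
  · rcases h with ⟨rfl, -⟩
    omega
  · omega
  · omega

lemma adj_cases {k : ℕ} {u v : GVert k} (h : (Gk k).Adj u v) : gkRel k u v ∨ gkRel k v u := by
  simp only [Gk, SimpleGraph.fromRel_adj] at h
  exact h.2

lemma adj_of {k : ℕ} {u v : GVert k} (h : gkRel k u v) : (Gk k).Adj u v := by
  simp only [Gk, SimpleGraph.fromRel_adj]
  refine ⟨?_, Or.inl h⟩
  rintro rfl
  have := gkRel_rank _ _ h
  omega

lemma walk_x {k : ℕ} (l : ℕ) : ∀ h : l < k,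
    ∃ w : (Gk k).Walk (GVert.x ⟨l, h⟩ 0) GVert.t, w.length = 2 * l + 2 := by
  induction l with
  | zero =>
    intro h
    have h1 : (Gk k).Adj (GVert.x ⟨0, h⟩ 0) (GVert.y ⟨0, h⟩ 0) := adj_of (by simp [gkRel])
    have h2 : (Gk k).Adj (GVert.y ⟨0, h⟩ 0) GVert.t := adj_of (by simp [gkRel])
    exact ⟨.cons h1 (.cons h2 .nil), by simp⟩
  | succ l ih =>
    intro h
    obtain ⟨w, hw⟩ := ih (by omega)
    have h1 : (Gk k).Adj (GVert.x ⟨l + 1, h⟩ 0) (GVert.y ⟨l + 1, h⟩ 0) :=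
      adj_of (by simp [gkRel])
    have h2 : (Gk k).Adj (GVert.y ⟨l + 1, h⟩ 0) (GVert.x ⟨l, by omega⟩ 0) :=
      adj_of (by simp [gkRel])
    exact ⟨.cons h1 (.cons h2 w), by simp [hw]; omega⟩

lemma dist_le {k : ℕ} (hk : 1 ≤ k) : (Gk k).dist GVert.s GVert.t ≤ 2 * k + 1 := by
  obtain ⟨w, hw⟩ := walk_x (k := k) (k - 1) (by omega)
  have h1 : (Gk k).Adj GVert.s (GVert.x ⟨k - 1, by omega⟩ 0) := adj_of (by simp [gkRel])
  have := SimpleGraph.dist_le (SimpleGraph.Walk.cons h1 w)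
  simp only [SimpleGraph.Walk.length_cons, hw] at this
  omega

/-- Extension of a finite sequence to the naturals. -/
def ext {k L : ℕ} (p : Fin (L + 1) → GVert k) (n : ℕ) : GVert k :=
  if h : n < L + 1 then p ⟨n, h⟩ else GVert.s

lemma path_struct {k L : ℕ} (hk : 1 ≤ k) (p : Fin (L + 1) → GVert k)
    (hp : IsShortestSTPath (Gk k) GVert.s GVert.t L p) :
    L = 2 * k + 1 ∧ (∀ n ≤ L, vrank (ext p n) = n) ∧
      ∀ n < L, gkRel k (ext p n) (ext p (n + 1)) := by
  obtain ⟨h0, hl, ha, hd⟩ := hp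
  have hL : L ≤ 2 * k + 1 := hd ▸ dist_le hk
  have hadj : ∀ n < L, (Gk k).Adj (ext p n) (ext p (n + 1)) := by
    intro n hn
    have := ha ⟨n, hn⟩
    simpa [ext, hn, Nat.lt_succ_of_lt hn] using this
  have hs : ext p 0 = GVert.s := by simpa [ext] using h0
  have ht : ext p L = GVert.t := by simpa [ext, Fin.last] using hl
  have hstep : ∀ n < L, vrank (ext p (n + 1)) = vrank (ext p n) + 1 ∨
      vrank (ext p n) = vrank (ext p (n + 1)) + 1 := by
    intro n hn
    rcases adj_cases (hadj n hn) with h | h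
    · exact Or.inl (gkRel_rank _ _ h)
    · exact Or.inr (gkRel_rank _ _ h)
  have hup : ∀ n ≤ L, vrank (ext p n) ≤ n := by
    intro n
    induction n with
    | zero => intro _; rw [hs]; simp [vrank]
    | succ n ih =>
      intro hn
      have := ih (by omega)
      have := hstep n (by omega)
      push_cast
      omega
  have hdown : ∀ n ≤ L, 2 * (k : ℤ) + 1 - n ≤ vrank (ext p (L - n)) := by
    intro n
    induction n with
    | zero => intro _; simp [ht, vrank]
    | succ n ih =>
      intro hn
      have h1 := ih (by omega)
      have h2 := hstep (L - (n + 1)) (by omega)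
      rw [show L - (n + 1) + 1 = L - n by omega] at h2
      push_cast
      omega
  have hLk : L = 2 * k + 1 := by
    have := hup L le_rfl
    rw [ht] at this
    simp only [vrank] at this
    omega
  have hr : ∀ n ≤ L, vrank (ext p n) = n := by
    intro n hn
    have h1 := hup n hn
    have h2 := hdown (L - n) (by omega)
    rw [show L - (L - n) = n by omega] at h2
    omega
  refine ⟨hLk, hr, ?_⟩
  intro n hn
  rcases adj_cases (hadj n hn) with h | h
  · exact h
  · have := gkRel_rank _ _ h
    rw [hr n (by omega), hr (n + 1) (by omega)] at this
    push_cast at this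
    omega

/-- Subscript of the `x`-vertex of a path at level `l`. -/
def pX {k L : ℕ} (p : Fin (L + 1) → GVert k) (l : ℕ) : ℤ := vidx (ext p (2 * k - 1 - 2 * l))

/-- Subscript of the `y`-vertex of a path at level `l`. -/
def pY {k L : ℕ} (p : Fin (L + 1) → GVert k) (l : ℕ) : ℤ := vidx (ext p (2 * k - 2 * l))

/-- Coordinates of a shortest path. -/
structure Valid (k : ℕ) (X Y : ℕ → ℤ) : Prop where
  y0 : ∀ l < k, 0 ≤ Y l
  y5 : ∀ l < k, Y l ≤ 5
  xy : ∀ l < k, X l = Y l ∨ X l = Y l + 1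
  d1 : ∀ l, l + 1 < k → Y (l + 1) = 1 → X l = 0
  d3 : ∀ l, l + 1 < k → Y (l + 1) = 3 → X l = 6
  d5 : ∀ l, l + 1 < k → Y (l + 1) = 5 → X l = 0

lemma rank_x {k : ℕ} (v : GVert k) (l : ℕ) (hl : l < k) (h : vrank v = 2 * k - 1 - 2 * l) :
    ∃ i, v = GVert.x ⟨l, hl⟩ i := by
  rcases v with _ | _ | ⟨l', i⟩ | ⟨l', i⟩ <;> simp only [vrank] at h
  · omega
  · omega
  · exact ⟨i, by congr 1; ext; simp; omega⟩
  · omega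

lemma rank_y {k : ℕ} (v : GVert k) (l : ℕ) (hl : l < k) (h : vrank v = 2 * k - 2 * l) :
    ∃ i, v = GVert.y ⟨l, hl⟩ i := by
  rcases v with _ | _ | ⟨l', i⟩ | ⟨l', i⟩ <;> simp only [vrank] at h
  · omega
  · omega
  · omega
  · exact ⟨i, by congr 1; ext; simp; omega⟩

lemma path_valid {k L : ℕ} (hk : 1 ≤ k) (p : Fin (L + 1) → GVert k)
    (hp : IsShortestSTPath (Gk k) GVert.s GVert.t L p) : Valid k (pX p) (pY p) := by
  obtain ⟨hL, hr, hg⟩ := path_struct hk p hp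
  have hx : ∀ l (hl : l < k), ∃ i, ext p (2 * k - 1 - 2 * l) = GVert.x ⟨l, hl⟩ i := by
    intro l hl
    apply rank_x
    rw [hr _ (by omega)]
    omega
  have hy : ∀ l (hl : l < k), ∃ i, ext p (2 * k - 2 * l) = GVert.y ⟨l, hl⟩ i := by
    intro l hl
    apply rank_y
    rw [hr _ (by omega)]
    omega
  have hyx : ∀ l, l + 1 < k → (((pY p (l + 1) = 0 ∨ pY p (l + 1) = 2 ∨ pY p (l + 1) = 4) ∨
        (pY p (l + 1) = 1 ∧ pX p l = 0) ∨ (pY p (l + 1) = 3 ∧ pX p l = 6) ∨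
        (pY p (l + 1) = 5 ∧ pX p l = 0))) := by
    intro l hl
    obtain ⟨i, hi⟩ := hx l (by omega)
    obtain ⟨j, hj⟩ := hy (l + 1) hl
    have := hg (2 * k - 2 * (l + 1)) (by omega)
    rw [show 2 * k - 2 * (l + 1) + 1 = 2 * k - 1 - 2 * l by omega, hi, hj] at this
    simp only [gkRel] at this
    simp only [pX, pY, hi, hj, vidx]
    omega
  refine ⟨?_, ?_, ?_, ?_, ?_, ?_⟩
  · intro l hl
    obtain ⟨i, hi⟩ := hy l hl
    simp [pY, hi, vidx]
  · intro l hl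
    obtain ⟨i, hi⟩ := hy l hl
    simp only [pY, hi, vidx]
    omega
  · intro l hl
    obtain ⟨i, hi⟩ := hx l hl
    obtain ⟨j, hj⟩ := hy l hl
    have := hg (2 * k - 1 - 2 * l) (by omega)
    rw [show 2 * k - 1 - 2 * l + 1 = 2 * k - 2 * l by omega, hi, hj] at this
    simp only [gkRel] at this
    simp only [pX, pY, hi, hj, vidx]
    omega
  · intro l hl h
    have := hyx l hl
    omega
  · intro l hl h
    have := hyx l hl
    omega
  · intro l hl h
    have := hyx l hl
    omega

/-- The bound. -/
def bnd : ℕ → ℤ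
  | 0 => 0
  | n + 1 => 9 + 2 * bnd n

lemma bnd_nonneg (n : ℕ) : 0 ≤ bnd n := by
  induction n with
  | zero => simp [bnd]
  | succ n ih => simp only [bnd]; omega

lemma bnd_eq (n : ℕ) : bnd n = 9 * (2 ^ n - 1) := by
  induction n with
  | zero => simp [bnd]
  | succ n ih => rw [bnd, ih, pow_succ]; ring

/-- Progress made below a vertex with subscript `j`. -/
def prog (j φ D : ℤ) : ℤ :=
  if j ≤ 1 then 0 else if j = 2 then φ else if j = 3 then D else if j = 4 then 2 * D - φ
  else 2 * D

/-- The potential. -/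
def pot (X Y : ℕ → ℤ) : ℕ → ℤ
  | 0 => 0
  | n + 1 => X n + Y n - 1 + prog (Y n) (max 0 (min (bnd n) (pot X Y n))) (bnd n)

lemma pot_zero {k : ℕ} {X Y : ℕ → ℤ} (n : ℕ) (hv : Valid k X Y) (hn : n < k)
    (h : Y n = 0) : pot X Y (n + 1) ≤ 0 := by
  have := hv.xy n hn
  simp only [pot, prog, h]
  simp
  omega

lemma pot_five {k : ℕ} {X Y : ℕ → ℤ} (n : ℕ) (hv : Valid k X Y) (hn : n < k)
    (h : Y n = 5) : bnd (n + 1) ≤ pot X Y (n + 1) := by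
  have := hv.xy n hn
  simp only [pot, prog, h, bnd]
  simp
  omega

lemma clamp_lo {k : ℕ} {X Y : ℕ → ℤ} (n : ℕ) (hv : Valid k X Y) (hn : n < k)
    (h : Y n = 1 ∨ Y n = 5) : max 0 (min (bnd n) (pot X Y n)) = 0 := by
  rcases n with _ | n
  · simp [bnd, pot]
  · have hx : X n = 0 := by
      rcases h with h | h
      · exact hv.d1 n hn h
      · exact hv.d5 n hn h
    have := hv.xy n (by omega)
    have := hv.y0 n (by omega)
    have := pot_zero n hv (by omega) (by omega)
    have := bnd_nonneg (n + 1)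
    omega

lemma clamp_hi {k : ℕ} {X Y : ℕ → ℤ} (n : ℕ) (hv : Valid k X Y) (hn : n < k)
    (h : Y n = 3) : max 0 (min (bnd n) (pot X Y n)) = bnd n := by
  rcases n with _ | n
  · simp [bnd, pot]
  · have hx : X n = 6 := hv.d3 n hn h
    have := hv.xy n (by omega)
    have := hv.y5 n (by omega)
    have := pot_five n hv (by omega) (by omega)
    have := bnd_nonneg (n + 1)
    omega

lemma pot_step {k : ℕ} {X Y X' Y' : ℕ → ℤ} (hv : Valid k X Y) (hv' : Valid k X' Y') (m : ℕ)
    (hne : ∀ l, l < k → l ≠ m → X l = X' l ∧ Y l = Y' l) (hm : X m = X' m ∨ Y m = Y' m)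
    (n : ℕ) : n ≤ k → (n ≤ m → pot X Y n = pot X' Y' n) ∧ pot X' Y' n ≤ pot X Y n + 1
      ∧ pot X Y n ≤ pot X' Y' n + 1 := by
  induction n with
  | zero => intro _; simp [pot]
  | succ n ih =>
    intro hn
    obtain ⟨h1, h2, h3⟩ := ih (by omega)
    have lo := clamp_lo n hv (by omega)
    have hi := clamp_hi n hv (by omega)
    have lo' := clamp_lo n hv' (by omega)
    have hi' := clamp_hi n hv' (by omega)
    have a1 := hv.xy n (by omega)
    have a2 := hv.y0 n (by omega)
    have a3 := hv.y5 n (by omega)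
    have b1 := hv'.xy n (by omega)
    have b2 := hv'.y0 n (by omega)
    have b3 := hv'.y5 n (by omega)
    have hD := bnd_nonneg n
    by_cases hnm : n = m
    · subst hnm
      have e := h1 le_rfl
      refine ⟨by omega, ?_⟩
      simp only [pot, prog]
      rw [← e] at lo' hi' ⊢
      generalize max 0 (min (bnd n) (pot X Y n)) = φ at *
      rcases hm with hm | hm
      · have c : Y n = Y' n ∨ Y n + 1 = Y' n ∨ Y n = Y' n + 1 := by omega
        have : Y n = 0 ∨ Y n = 1 ∨ Y n = 2 ∨ Y n = 3 ∨ Y n = 4 ∨ Y n = 5 := by omega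
        clear h1 h2 h3 e
        split_ifs <;> omega
      · rw [hm]
        generalize prog (Y' n) φ (bnd n) = z
        constructor <;> omega
    · obtain ⟨ex, ey⟩ := hne n (by omega) hnm
      constructor
      · intro h
        simp only [pot, ex, ey, h1 (by omega)]
      · have c1 : max 0 (min (bnd n) (pot X' Y' n)) ≤ max 0 (min (bnd n) (pot X Y n)) + 1 := by
          omega
        have c2 : max 0 (min (bnd n) (pot X Y n)) ≤ max 0 (min (bnd n) (pot X' Y' n)) + 1 := by
          omega
        simp only [pot, prog, ex, ey]
        generalize max 0 (min (bnd n) (pot X Y n)) = φ at *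
        generalize max 0 (min (bnd n) (pot X' Y' n)) = φ' at *
        split_ifs <;> constructor <;> omega

lemma path_step {k L : ℕ} (hk : 1 ≤ k) (p q : Fin (L + 1) → GVert k)
    (hp : IsShortestSTPath (Gk k) GVert.s GVert.t L p)
    (hq : IsShortestSTPath (Gk k) GVert.s GVert.t L q) (h : DiffOne p q) :
    pot (pX q) (pY q) k ≤ pot (pX p) (pY p) k + 1 := by
  obtain ⟨i, hne, hi⟩ := h
  have hi0 : (i : ℕ) ≠ 0 := by
    intro h
    have : i = 0 := Fin.ext h
    subst this
    exact hne (hp.1.trans hq.1.symm)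
  have he : ∀ n, n ≠ (i : ℕ) → ext p n = ext q n := by
    intro n hn
    simp only [ext]
    split_ifs with hlt
    · exact hi _ (by intro h; apply hn; rw [← h])
    · rfl
  have hiL := i.2
  have hL := (path_struct hk p hp).1
  refine (pot_step (path_valid hk p hp) (path_valid hk q hq) ((2 * k - (i : ℕ)) / 2)
    ?_ ?_ k le_rfl).2.1
  · intro l hl hne
    constructor
    · simp only [pX]; rw [he _ (by omega)]
    · simp only [pY]; rw [he _ (by omega)]
  · rcases Nat.even_or_odd' (i : ℕ) with ⟨c, hc | hc⟩
    · left; simp only [pX]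
      by_cases h : 2 * k - 1 - 2 * ((2 * k - (i : ℕ)) / 2) = i
      · exfalso; omega
      · rw [he _ h]
    · right; simp only [pY]; rw [he _ (by omega)]

lemma pY_of_mem {k L : ℕ} (hk : 1 ≤ k) (p : Fin (L + 1) → GVert k)
    (hp : IsShortestSTPath (Gk k) GVert.s GVert.t L p) (j : Fin 6)
    (hlt : k - 1 < k) (h : ∃ i, p i = GVert.y ⟨k - 1, hlt⟩ j) : pY p (k - 1) = (j : ℕ) := by
  obtain ⟨i, hi⟩ := h
  have he : ext p i = p i := by rw [ext, dif_pos i.2]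
  have hr := (path_struct hk p hp).2.1 i (by omega)
  rw [he, hi] at hr
  simp only [vrank] at hr
  have : 2 * k - 2 * (k - 1) = (i : ℕ) := by omega
  simp only [pY, this, he, hi, vidx]

/-- if `p` is a shortest `(s,t)`-path in `G^k` through `y^k_1` and `q` is a
shortest `(s,t)`-path in `G^k` through `y^k_6`, then every reconfiguration sequence from
`p` to `q` has length at least `9(2^k - 1)`. -/
theorem stmt0 (k : ℕ) (hk : 1 ≤ k) (L : ℕ) (p q : Fin (L + 1) → GVert k)
    (hp : IsShortestSTPath (Gk k) GVert.s GVert.t L p)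
    (hq : IsShortestSTPath (Gk k) GVert.s GVert.t L q)
    (hpy : ∃ i, p i = GVert.y ⟨k - 1, by omega⟩ ⟨0, by omega⟩)
    (hqy : ∃ i, q i = GVert.y ⟨k - 1, by omega⟩ ⟨5, by omega⟩)
    (ℓ : ℕ) (ρ : ℕ → (Fin (L + 1) → GVert k))
    (hρ : SPReconfSeq (Gk k) GVert.s GVert.t L ρ ℓ p q) :
    9 * (2 ^ k - 1) ≤ ℓ := by
  obtain ⟨h0, hl, hs, hd⟩ := hρ
  have hp0 := pot_zero (k - 1) (path_valid hk p hp) (by omega)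
    (by rw [pY_of_mem hk p hp _ _ hpy]; rfl)
  have hq0 := pot_five (k - 1) (path_valid hk q hq) (by omega)
    (by rw [pY_of_mem hk q hq _ _ hqy]; rfl)
  rw [Nat.sub_add_cancel hk] at hp0 hq0
  have key : ∀ n ≤ ℓ, pot (pX (ρ n)) (pY (ρ n)) k ≤ n := by
    intro n
    induction n with
    | zero => intro _; rw [h0]; simpa using hp0
    | succ n ih =>
      intro hn
      have h1 := ih (by omega)
      have h2 := path_step hk _ _ (hs n (by omega)) (hs (n + 1) hn) (hd n (by omega))
      push_cast
      omega
  have hfin := key ℓ le_rfl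
  rw [hl] at hfin
  rw [bnd_eq] at hq0
  have hpow : 1 ≤ 2 ^ k := Nat.one_le_two_pow
  zify [hpow]
  omega
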